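/- With respect to the Poisson bracket defined by the Borisov–Mamaev bivector P̂_g on ℝ⁶ in coordinates (γ, M), the Hamiltonian H = ½(M, A_γ M), with A_γ = A + d (Aγ)(Aγ)ᵀ / g²(γ), and the function M² = (M, M) are in involution: {H, M²}_g = 0. -/

import Mathlib

open Matrix

/-- The `3×3` skew-symmetric matrix `ẑ` of `z ∈ ℝ³`. -/
def hat (z : Fin 3 → ℝ) : Matrix (Fin 3) (Fin 3) ℝ :=
  !![0, z 2, -(z 1); -(z 2), 0, z 0; z 1, -(z 0), 0]

/-- Partial derivative in the coordinate direction `q` on `ℝ^(Fin 2 × Fin 3) ≅ ℝ⁶`. -/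
noncomputable def pd6 (f : ((Fin 2 × Fin 3) → ℝ) → ℝ) (q : Fin 2 × Fin 3)
    (x : (Fin 2 × Fin 3) → ℝ) : ℝ :=
  fderiv ℝ f x (Pi.single q 1)

/-- The γ-part of a point of `ℝ⁶`. -/
def gm (x : (Fin 2 × Fin 3) → ℝ) : Fin 3 → ℝ := fun i => x (0, i)

/-- The M-part of a point of `ℝ⁶`. -/
def mm (x : (Fin 2 × Fin 3) → ℝ) : Fin 3 → ℝ := fun i => x (1, i)

/-- The Chaplygin density `g(γ) = √(1 − d (γ, Aγ))`, `A = diag a`. -/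
noncomputable def gCh (d : ℝ) (a : Fin 3 → ℝ) (γ : Fin 3 → ℝ) : ℝ :=
  Real.sqrt (1 - d * (γ ⬝ᵥ fun i => a i * γ i))

/-- The Borisov–Mamaev Poisson bivector
`P̂_g = g·[[0, Γ̂], [Γ̂, M̂]] − d g⁻¹ (M, Aγ)·[[0,0],[0, Γ̂]]` on `ℝ⁶` with
coordinates `(γ, M)`. -/
noncomputable def Pbm (d : ℝ) (a : Fin 3 → ℝ) (x : (Fin 2 × Fin 3) → ℝ) :
    Matrix (Fin 2 × Fin 3) (Fin 2 × Fin 3) ℝ :=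
  fun p q =>
    if p.1 = 0 then
      (if q.1 = 0 then 0 else gCh d a (gm x) * hat (gm x) p.2 q.2)
    else if q.1 = 0 then gCh d a (gm x) * hat (gm x) p.2 q.2
    else gCh d a (gm x) * hat (mm x) p.2 q.2 -
      d * (gCh d a (gm x))⁻¹ * (mm x ⬝ᵥ fun i => a i * gm x i) * hat (gm x) p.2 q.2

/-- The Chaplygin matrix `A_γ = A + d (Aγ)(Aγ)ᵀ / g²(γ)` with `A = diag a` and
`g²(γ) = 1 − d (γ, Aγ)`. -/
noncomputable def Ag (d : ℝ) (a : Fin 3 → ℝ) (γ : Fin 3 → ℝ) :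
    Matrix (Fin 3) (Fin 3) ℝ :=
  Matrix.diagonal a +
    (d / (1 - d * (γ ⬝ᵥ fun i => a i * γ i))) •
      Matrix.vecMulVec (fun i => a i * γ i) (fun i => a i * γ i)

/-- The Chaplygin ball Hamiltonian `H = ½ (M, A_γ M)` on `ℝ⁶`. -/
noncomputable def Hch (d : ℝ) (a : Fin 3 → ℝ) (x : (Fin 2 × Fin 3) → ℝ) : ℝ :=
  (1 : ℝ) / 2 * (mm x ⬝ᵥ (Ag d a (gm x)).mulVec (mm x))

theorem hasH (d : ℝ) (a : Fin 3 → ℝ) (x : (Fin 2 × Fin 3) → ℝ)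
    (hx : 1 - d * (gm x ⬝ᵥ fun i => a i * gm x i) ≠ 0) (q : Fin 2 × Fin 3) :
    pd6 (Hch d a) q x =
      if q.1 = 0 then
        d * (mm x ⬝ᵥ fun i => a i * gm x i) / (1 - d * (gm x ⬝ᵥ fun i => a i * gm x i)) *
        (a q.2 * mm x q.2 + d * (mm x ⬝ᵥ fun i => a i * gm x i) /
          (1 - d * (gm x ⬝ᵥ fun i => a i * gm x i)) * (a q.2 * gm x q.2))
      else (a q.2 * mm x q.2 + d * (mm x ⬝ᵥ fun i => a i * gm x i) /
          (1 - d * (gm x ⬝ᵥ fun i => a i * gm x i)) * (a q.2 * gm x q.2)) := by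
  have hp : ∀ p : Fin 2 × Fin 3, HasFDerivAt (fun y : (Fin 2 × Fin 3) → ℝ => y p)
    (ContinuousLinearMap.proj (R := ℝ) (φ := fun _ : Fin 2 × Fin 3 => ℝ) p) x :=
    fun p => hasFDerivAt_apply p x
  have hS : HasFDerivAt (fun y => ∑ i : Fin 3, y (1, i) * (a i * y (0, i))) _ x :=
    HasFDerivAt.fun_sum (u := Finset.univ) fun i _ => (hp (1, i)).mul ((hp (0, i)).const_mul (a i))
  have hT : HasFDerivAt (fun y => ∑ i : Fin 3, y (1, i) * (a i * y (1, i))) _ x :=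
    HasFDerivAt.fun_sum (u := Finset.univ) fun i _ => (hp (1, i)).mul ((hp (1, i)).const_mul (a i))
  have hQ : HasFDerivAt (fun y => ∑ i : Fin 3, y (0, i) * (a i * y (0, i))) _ x :=
    HasFDerivAt.fun_sum (u := Finset.univ) fun i _ => (hp (0, i)).mul ((hp (0, i)).const_mul (a i))
  have hG := (hQ.const_mul d).const_sub 1
  have hx' : 1 - d * ∑ i : Fin 3, x (0, i) * (a i * x (0, i)) ≠ 0 := hx
  have hI := (hasDerivAt_inv hx').comp_hasFDerivAt x hG
  have hH := (hT.add (((hS.mul hS).mul hI).const_mul d)).const_mul (1 / 2 : ℝ)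
  have e : Hch d a = fun y => 1 / 2 * (∑ i : Fin 3, y (1, i) * (a i * y (1, i)) +
      d * ((∑ i : Fin 3, y (1, i) * (a i * y (0, i))) * (∑ i : Fin 3, y (1, i) * (a i * y (0, i)))
        * (1 - d * ∑ i : Fin 3, y (0, i) * (a i * y (0, i)))⁻¹)) := by
      funext y
      simp only [Hch, Ag, mm, gm, dotProduct, Matrix.mulVec, Matrix.add_apply, Matrix.smul_apply,
        Matrix.vecMulVec_apply, Fin.sum_univ_three, Matrix.diagonal_apply, smul_eq_mul, div_eq_mul_inv]
      simp
      ring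
  have hE : HasFDerivAt (Hch d a) _ x :=
    hH.congr_of_eventuallyEq (Filter.Eventually.of_forall fun y => congrFun e y)
  rw [pd6, hE.fderiv]
  simp only [gm, mm, dotProduct, Fin.sum_univ_three] at hx ⊢
  obtain ⟨b, j⟩ := q
  generalize hGG : 1 - d * (x (0, 0) * (a 0 * x (0, 0)) + x (0, 1) * (a 1 * x (0, 1)) + x (0, 2) * (a 2 * x (0, 2))) = G at *
  fin_cases b <;> fin_cases j <;>
    simp [Fin.sum_univ_three, Pi.single_apply, hGG] <;> field_simp <;> ring

theorem hasM (q : Fin 2 × Fin 3) (x : (Fin 2 × Fin 3) → ℝ) :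
    pd6 (fun y => ∑ i : Fin 3, mm y i * mm y i) q x = if q.1 = 0 then 0 else 2 * mm x q.2 := by
  have hp : ∀ p : Fin 2 × Fin 3, HasFDerivAt (fun y : (Fin 2 × Fin 3) → ℝ => y p)
    (ContinuousLinearMap.proj (R := ℝ) (φ := fun _ : Fin 2 × Fin 3 => ℝ) p) x :=
    fun p => hasFDerivAt_apply p x
  have hT : HasFDerivAt (fun y => ∑ i : Fin 3, mm y i * mm y i) _ x :=
    HasFDerivAt.fun_sum (u := Finset.univ) fun i _ => (hp (1, i)).mul (hp (1, i))
  rw [pd6, hT.fderiv]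
  obtain ⟨b, j⟩ := q
  fin_cases b <;> fin_cases j <;>
    simp [Fin.sum_univ_three, Pi.single_apply, mm] <;> ring

/-- With respect to the Poisson bracket of the Borisov–Mamaev bivector
`P̂_g`, the Hamiltonian `H = ½ (M, A_γ M)` and `M² = (M, M)` are in involution:
`{H, M²}_g = 0` at every point where `1 − d (γ, Aγ) > 0`. -/
theorem chaplygin_H_Msq_involution (d : ℝ) (hd : 0 < d) (a : Fin 3 → ℝ)
    (x : (Fin 2 × Fin 3) → ℝ)
    (hx : 0 < 1 - d * (gm x ⬝ᵥ fun i => a i * gm x i)) :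
    ∑ p, ∑ q, Pbm d a x p q * pd6 (Hch d a) p x *
      pd6 (fun y => ∑ i : Fin 3, mm y i * mm y i) q x = 0 := by
  have h0 := Real.sqrt_pos.2 hx
  have h1 := Real.sq_sqrt hx.le
  simp only [hasH d a x hx.ne', hasM, Pbm, gCh]
  generalize Real.sqrt (1 - d * (gm x ⬝ᵥ fun i => a i * gm x i)) = g at *
  rw [← h1]
  have hg := h0.ne'
  generalize (mm x ⬝ᵥ fun i => a i * gm x i) = s
  simp only [Fintype.sum_prod_type, Fin.sum_univ_two, Fin.sum_univ_three, hat]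
  simp
  field_simp
  ring
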